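/- Let N ≥ 3 and let K = ⋃_{i=1}^k \bar{B}_{ρ_i}(x_i) be a finite union of k ≥ 1 pairwise disjoint closed balls in ℝ^N with radii ρ_i > 0. Let γ ∈ (0,1), let φ : (0,∞) → (0,∞) be nonincreasing and locally γ-Hölder continuous, and let f : (0,∞) → (0,∞) be C¹ and strictly decreasing. Then the inequality −Δu ≥ φ(δ_K(x)) f(u) has a C² positive solution on ℝ^N \ K if and only if ∫₀^∞ r·φ(r) dr < ∞. -/

import Mathlib

open Metric Set MeasureTheory Filter

noncomputable def laplacian {N : ℕ} (u : EuclideanSpace ℝ (Fin N) → ℝ)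
    (x : EuclideanSpace ℝ (Fin N)) : ℝ :=
  ∑ i, iteratedFDeriv ℝ 2 u x ![EuclideanSpace.single i 1, EuclideanSpace.single i 1]

/-! In dimension `m + 2`, a radial function `v(‖x - c‖)` solves `-Δ v = ψ(‖x - c‖)` when the
flux `-r ^ (m + 1) * v'` has derivative `r ^ (m + 1) * ψ`. For `ψ ≥ 0` the solution with vanishing
Cauchy data at a radius `r₀ > ρ > 0` is nonpositive and, for `m ≥ 1`, bounded below on `(ρ, ∞)`
exactly when `∫_ρ^∞ (s - ρ) ψ(s) ds < ∞`.

Necessity: let `u` be a supersolution and `h` a radial harmonic function with `h(r₀) = 0`, `h ≤ 1`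
and `h > 0` on one side of `r₀`. On the annulus between `r₀` and a radius `r₁` on that side, the
maximum principle gives `u ≥ (f(T) / 2) p + T h`, where `p ≤ 0` is the potential above, as soon as
the right-hand side is `≤ 0` at `r₁`. If `p` were unbounded below, such an `r₁` would exist for
every `T`, and `T → ∞` would make `u` infinite at a fixed point.

Sufficiency: the potentials of `f(1) ψ` around the balls are bounded below, so each can be shifted
to be at least `1`; their sum `u` satisfies `f(u) ≤ f(1)` and is therefore a supersolution.

To have a continuous `ψ`, replace `φ` by its dyadic average `ψ(r) = (1 / r) ∫_r^{2r} φ`, which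
satisfies `φ(2r) ≤ ψ(r) ≤ φ(r)` and has a finite first moment exactly when `φ` does. -/

open Module InnerProductSpace
open scoped Interval Topology Laplacian

theorem laplacian_eq_innerProductSpace_laplacian {N : ℕ} (u : EuclideanSpace ℝ (Fin N) → ℝ) :
    laplacian u = Δ u := by
  ext x
  simp [laplacian,
    laplacian_eq_iteratedFDeriv_orthonormalBasis u (EuclideanSpace.basisFun (Fin N) ℝ)]

variable {E : Type*} [NormedAddCommGroup E] [InnerProductSpace ℝ E]

lemma hasFDerivAt_norm_sub {c x : E} (hx : x ≠ c) :
    HasFDerivAt (fun y => ‖y - c‖) (‖x - c‖⁻¹ • innerSL ℝ (x - c)) x := by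
  have hsq : HasFDerivAt (fun y => ‖y - c‖ ^ 2) (2 • innerSL ℝ (x - c)) x :=
    ((hasFDerivAt_id x).sub_const c).norm_sq
  have hsqrt := hsq.sqrt (pow_ne_zero 2 (norm_sub_eq_zero_iff.not.2 hx))
  simp only [Real.sqrt_sq (norm_nonneg _)] at hsqrt
  refine hsqrt.congr_fderiv ?_
  ext z
  simp
  ring

section Laplacian

variable {u v : E → ℝ} {c x : E}

lemma deriv_deriv_nonneg_of_isLocalMin {g : ℝ → ℝ} {t : ℝ} (hmin : IsLocalMin g t)
    (hg : ContinuousAt g t) : 0 ≤ deriv (deriv g) t := by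
  by_contra! hneg
  have hmax : IsLocalMax g t := isLocalMax_of_deriv_deriv_neg hneg hmin.deriv_eq_zero hg
  have hconst : g =ᶠ[𝓝 t] fun _ => g t := by
    filter_upwards [hmin, hmax] with y hle hge using le_antisymm hge hle
  have hzero : deriv (deriv g) t = 0 := by
    rw [hconst.deriv.deriv_eq]
    simp
  exact hneg.ne hzero

lemma iteratedFDeriv_two_nonneg_of_isLocalMin (hu : ContDiffAt ℝ 2 u x) (hmin : IsLocalMin u x)
    (e : E) : 0 ≤ iteratedFDeriv ℝ 2 u x ![e, e] := by
  have hline (t : ℝ) : HasDerivAt (fun t : ℝ => x + t • e) e t := by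
    simpa using ((hasDerivAt_id t).smul_const e).const_add x
  have hlim : Tendsto (fun t : ℝ => x + t • e) (𝓝 0) (𝓝 x) := by
    simpa using (hline 0).continuousAt.tendsto
  have hdiff : ∀ᶠ y in 𝓝 x, DifferentiableAt ℝ u y :=
    (hu.eventually (by simp)).mono fun y hy => hy.differentiableAt two_ne_zero
  have hderiv : deriv (fun t : ℝ => u (x + t • e)) =ᶠ[𝓝 0] fun t => fderiv ℝ u (x + t • e) e := by
    filter_upwards [hlim.eventually hdiff] with t ht
    exact (ht.hasFDerivAt.comp_hasDerivAt t (hline t)).deriv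
  have hderiv₂ : HasDerivAt (fun t : ℝ => fderiv ℝ u (x + t • e) e)
      (fderiv ℝ (fderiv ℝ u) x e e) 0 := by
    have hfderiv : HasFDerivAt (fderiv ℝ u) (fderiv ℝ (fderiv ℝ u) x) (x + (0 : ℝ) • e) := by
      simpa using ((hu.fderiv_right (m := 1) (by norm_num)).differentiableAt
        one_ne_zero).hasFDerivAt
    have hcomp := hfderiv.comp_hasDerivAt (0 : ℝ) (hline 0)
    have happly := hcomp.clm_apply (hasDerivAt_const (0 : ℝ) e)
    simpa using happly
  have hmin' : IsLocalMin (fun t : ℝ => u (x + t • e)) 0 := by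
    change ∀ᶠ t in 𝓝 (0 : ℝ), u (x + (0 : ℝ) • e) ≤ u (x + t • e)
    simpa using hlim.eventually hmin
  have hcont : ContinuousAt (fun t : ℝ => u (x + t • e)) 0 :=
    ContinuousAt.comp (f := fun t : ℝ => x + t • e) (g := u)
      (by simpa using hu.continuousAt) (hline 0).continuousAt
  rw [iteratedFDeriv_two_apply]
  change 0 ≤ fderiv ℝ (fderiv ℝ u) x e e
  rw [← hderiv₂.deriv, ← hderiv.deriv_eq]
  exact deriv_deriv_nonneg_of_isLocalMin hmin' hcont

variable [FiniteDimensional ℝ E]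

lemma laplacian_finsetSum {ι : Type*} {s : Finset ι} {w : ι → E → ℝ}
    (hw : ∀ i ∈ s, ContDiffAt ℝ 2 (w i) x) :
    Δ (fun y => ∑ i ∈ s, w i y) x = ∑ i ∈ s, Δ (w i) x := by
  classical
  induction s using Finset.induction_on with
  | empty => simp [laplacian_const]
  | insert i s hi ih =>
    have hs : ∀ j ∈ s, ContDiffAt ℝ 2 (w j) x := fun j hj => hw j (Finset.mem_insert_of_mem hj)
    simp only [Finset.sum_insert hi]
    rw [← ih hs]
    exact (hw i (Finset.mem_insert_self i s)).laplacian_add (ContDiffAt.sum hs)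

lemma laplacian_eq_sum_of_hasFDerivAt {ι : Type*} [Fintype ι] (b : OrthonormalBasis ι ℝ E)
    {G : E → E →L[ℝ] ℝ} {H : E →L[ℝ] E →L[ℝ] ℝ} (hu : ∀ᶠ y in 𝓝 x, HasFDerivAt u (G y) y)
    (hG : HasFDerivAt G H x) : Δ u x = ∑ i, H (b i) (b i) := by
  have hfderiv : fderiv ℝ u =ᶠ[𝓝 x] G := hu.mono fun y hy => hy.fderiv
  simp [laplacian_eq_iteratedFDeriv_orthonormalBasis u b, iteratedFDeriv_two_apply,
    hfderiv.fderiv_eq, hG.fderiv]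

lemma laplacian_comp_norm_sub {g g' : ℝ → ℝ} {g'' : ℝ} (hx : x ≠ c)
    (hg : ∀ᶠ r in 𝓝 ‖x - c‖, HasDerivAt g (g' r) r) (hg' : HasDerivAt g' g'' ‖x - c‖) :
    Δ (fun y => g ‖y - c‖) x = g'' + (finrank ℝ E - 1) / ‖x - c‖ * g' ‖x - c‖ := by
  have hr : ‖x - c‖ ≠ 0 := norm_sub_eq_zero_iff.not.2 hx
  have hgrad : ∀ᶠ y in 𝓝 x,
      HasFDerivAt (fun y => g ‖y - c‖) ((g' ‖y - c‖ / ‖y - c‖) • innerSL ℝ (y - c)) y := by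
    have hnorm : Tendsto (fun y => ‖y - c‖) (𝓝 x) (𝓝 ‖x - c‖) :=
      Continuous.tendsto (by fun_prop) x
    filter_upwards [hnorm.eventually hg, eventually_ne_nhds hx] with y hy hyc
    refine (hy.comp_hasFDerivAt y (hasFDerivAt_norm_sub hyc)).congr_fderiv ?_
    rw [smul_smul, div_eq_mul_inv]
  have hcoeff : HasFDerivAt (fun y => g' ‖y - c‖ / ‖y - c‖)
      (((g'' * ‖x - c‖ - g' ‖x - c‖) / ‖x - c‖ ^ 2) • ‖x - c‖⁻¹ • innerSL ℝ (x - c)) x := by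
    have hquot := (hg'.div (hasDerivAt_id _) hr).comp_hasFDerivAt x (hasFDerivAt_norm_sub hx)
    exact hquot.congr_fderiv (by simp)
  have hinner : HasFDerivAt (fun y => innerSL ℝ (y - c)) (innerSL ℝ) x :=
    (innerSL ℝ (E := E)).hasFDerivAt.comp x ((hasFDerivAt_id x).sub_const c)
  have htrace : ∑ i, inner ℝ (x - c) (stdOrthonormalBasis ℝ E i) ^ 2 = ‖x - c‖ ^ 2 := by
    simpa using (stdOrthonormalBasis ℝ E).sum_sq_norm_inner_left (x - c)
  have hdiag (i) : (innerSL ℝ : E →L[ℝ] E →L[ℝ] ℝ) (stdOrthonormalBasis ℝ E i)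
      (stdOrthonormalBasis ℝ E i) = 1 :=
    inner_self_eq_one_of_norm_eq_one ((stdOrthonormalBasis ℝ E).norm_eq_one i)
  rw [laplacian_eq_sum_of_hasFDerivAt (stdOrthonormalBasis ℝ E) hgrad (hcoeff.smul hinner)]
  simp only [add_apply, smul_apply, smul_eq_mul, ContinuousLinearMap.smulRight_apply,
    innerSL_apply_apply, hdiag, mul_one, mul_assoc, ← sq, Finset.sum_add_distrib,
    ← Finset.mul_sum, htrace, Finset.sum_const, Finset.card_univ, Fintype.card_fin, nsmul_eq_mul]
  field_simp
  ring

lemma laplacian_nonneg_of_isLocalMin (hu : ContDiffAt ℝ 2 u x)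
    (hmin : IsLocalMin u x) : 0 ≤ Δ u x := by
  rw [laplacian_eq_iteratedFDeriv_stdOrthonormalBasis]
  exact Finset.sum_nonneg fun i _ => iteratedFDeriv_two_nonneg_of_isLocalMin hu hmin _

lemma le_of_laplacian_lt_of_le_frontier {A : Set E} (hA : IsCompact A)
    (hu : ∀ y ∈ A, ContDiffAt ℝ 2 u y) (hv : ∀ y ∈ A, ContDiffAt ℝ 2 v y)
    (hfrontier : ∀ y ∈ frontier A, v y ≤ u y)
    (hlt : ∀ y ∈ A, u y < v y → Δ u y < Δ v y) (hx : x ∈ A) : v x ≤ u x := by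
  have hcont : ContinuousOn (u - v) A := fun y hy =>
    ((hu y hy).sub (hv y hy)).continuousAt.continuousWithinAt
  obtain ⟨z, hzA, hz⟩ := hA.exists_isMinOn ⟨x, hx⟩ hcont
  by_contra! hxlt
  have hzlt : u z < v z := by
    have := isMinOn_iff.1 hz x hx
    simp only [Pi.sub_apply] at this
    linarith
  have hzint : A ∈ 𝓝 z := by
    rw [← mem_interior_iff_mem_nhds]
    by_contra hnot
    exact hzlt.not_ge (hfrontier z (hA.isClosed.frontier_eq ▸ ⟨hzA, hnot⟩))
  have hnonneg : 0 ≤ Δ (u - v) z :=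
    laplacian_nonneg_of_isLocalMin ((hu z hzA).sub (hv z hzA)) (hz.isLocalMin hzint)
  rw [(hu z hzA).laplacian_sub (hv z hzA)] at hnonneg
  linarith [hlt z hzA hzlt]

end Laplacian

section Radial

variable {m : ℕ} {ψ ψ₁ ψ₂ v v₁ v₂ : ℝ → ℝ} {ρ r₀ r s : ℝ}

/-- Solutions on `(ρ, ∞)` of the radial equation `-(v'' + (m + 1) / r * v') = ψ`, the form taken by
`-Δ u = ψ(‖·‖)` in dimension `m + 2` for `u = v(‖·‖)`. It is written as a first-order system with
the flux `Q = -r ^ (m + 1) * v'`, so that `v` is not assumed to be twice differentiable. -/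
def IsRadialSolution (m : ℕ) (ψ v : ℝ → ℝ) (ρ : ℝ) : Prop :=
  ∃ Q : ℝ → ℝ, ∀ r > ρ,
    HasDerivAt v (-(Q r / r ^ (m + 1))) r ∧ HasDerivAt Q (r ^ (m + 1) * ψ r) r

namespace IsRadialSolution

lemma const (a : ℝ) : IsRadialSolution m 0 (fun _ => a) ρ :=
  ⟨0, fun r _ => ⟨by simpa using hasDerivAt_const r a, by simp⟩⟩

lemma add (h₁ : IsRadialSolution m ψ₁ v₁ ρ) (h₂ : IsRadialSolution m ψ₂ v₂ ρ) :
    IsRadialSolution m (ψ₁ + ψ₂) (v₁ + v₂) ρ := by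
  obtain ⟨Q₁, h₁⟩ := h₁
  obtain ⟨Q₂, h₂⟩ := h₂
  refine ⟨Q₁ + Q₂, fun r hr => ⟨?_, ?_⟩⟩
  · exact ((h₁ r hr).1.add (h₂ r hr).1).congr_deriv (by simp only [Pi.add_apply]; ring)
  · exact ((h₁ r hr).2.add (h₂ r hr).2).congr_deriv (by simp only [Pi.add_apply]; ring)

lemma const_smul (a : ℝ) (h : IsRadialSolution m ψ v ρ) : IsRadialSolution m (a • ψ) (a • v) ρ := by
  obtain ⟨Q, h⟩ := h
  refine ⟨a • Q, fun r hr => ⟨?_, ?_⟩⟩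
  · exact ((h r hr).1.const_smul a).congr_deriv (by simp only [Pi.smul_apply, smul_eq_mul]; ring)
  · exact ((h r hr).2.const_smul a).congr_deriv (by simp only [Pi.smul_apply, smul_eq_mul]; ring)

lemma contDiffOn (h : IsRadialSolution m ψ v ρ) (hρ : 0 ≤ ρ) (hψ : ContinuousOn ψ (Ioi ρ)) :
    ContDiffOn ℝ 2 v (Ioi ρ) := by
  obtain ⟨Q, h⟩ := h
  have hQ : ContDiffOn ℝ 1 Q (Ioi ρ) := by
    rw [← zero_add 1, contDiffOn_succ_iff_deriv_of_isOpen isOpen_Ioi]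
    refine ⟨fun r hr => (h r hr).2.differentiableAt.differentiableWithinAt, by simp, ?_⟩
    exact contDiffOn_zero.2
      (((continuous_pow (m + 1)).continuousOn.mul hψ).congr fun r hr => (h r hr).2.deriv)
  rw [← one_add_one_eq_two, contDiffOn_succ_iff_deriv_of_isOpen isOpen_Ioi]
  refine ⟨fun r hr => (h r hr).1.differentiableAt.differentiableWithinAt, by simp, ?_⟩
  refine ContDiffOn.congr ?_ fun r hr => (h r hr).1.deriv
  exact (hQ.div (contDiff_id.pow _).contDiffOn fun r hr =>
    pow_ne_zero _ (hρ.trans_lt hr).ne').neg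

variable {c x : E}

lemma contDiffAt_comp_norm_sub (h : IsRadialSolution m ψ v ρ) (hρ : 0 ≤ ρ)
    (hψ : ContinuousOn ψ (Ioi ρ)) (hx : ρ < ‖x - c‖) : ContDiffAt ℝ 2 (fun y => v ‖y - c‖) x := by
  have hv : ContDiffAt ℝ 2 v ‖x - c‖ := (h.contDiffOn hρ hψ).contDiffAt (Ioi_mem_nhds hx)
  exact hv.comp x ((contDiffAt_id.sub contDiffAt_const).norm ℝ (norm_pos_iff.1 (hρ.trans_lt hx)))

lemma laplacian_comp_norm_sub [FiniteDimensional ℝ E] (hdim : finrank ℝ E = m + 2)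
    (h : IsRadialSolution m ψ v ρ) (hρ : 0 ≤ ρ) (hx : ρ < ‖x - c‖) :
    Δ (fun y => v ‖y - c‖) x = -ψ ‖x - c‖ := by
  obtain ⟨Q, h⟩ := h
  have hr : ‖x - c‖ ≠ 0 := (hρ.trans_lt hx).ne'
  have hflux : HasDerivAt (fun r => -(Q r / r ^ (m + 1)))
      (-ψ ‖x - c‖ + (m + 1) * Q ‖x - c‖ / ‖x - c‖ ^ (m + 2)) ‖x - c‖ := by
    refine ((h _ hx).2.div (hasDerivAt_pow (m + 1) ‖x - c‖)
      (pow_ne_zero _ hr)).neg.congr_deriv ?_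
    push_cast
    field_simp
    ring
  rw [_root_.laplacian_comp_norm_sub (norm_sub_eq_zero_iff.not.1 hr)
    ((lt_mem_nhds hx).mono fun r hr => (h r hr).1) hflux, hdim]
  push_cast
  field_simp
  ring

end IsRadialSolution

lemma isRadialSolution_one_sub_div_pow (B : ℝ) (hρ : 0 ≤ ρ) :
    IsRadialSolution m 0 (fun r => B * (1 - (r₀ / r) ^ m)) ρ := by
  refine ⟨fun _ => -(B * m * r₀ ^ m), fun r hr => ⟨?_, by simpa using hasDerivAt_const r _⟩⟩
  have hr' : r ≠ 0 := (hρ.trans_lt hr).ne'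
  have hdiv : HasDerivAt (fun r => r₀ / r) (-r₀ / r ^ 2) r :=
    ((hasDerivAt_const r r₀).div (hasDerivAt_id r) hr').congr_deriv (by simp)
  refine (((hdiv.pow m).const_sub 1).const_mul B).congr_deriv ?_
  rcases m with _ | m
  · simp
  · simp only [Nat.add_sub_cancel, div_pow]
    field_simp
    ring

/-- The solution of the radial equation with vanishing Cauchy data at `r₀`, by variation of
parameters in the basis `1`, `r ^ (-m)` of radial harmonic functions. -/
noncomputable def radialPotential (m : ℕ) (ψ : ℝ → ℝ) (r₀ r : ℝ) : ℝ :=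
  ((∫ s in r₀..r, s ^ (m + 1) * ψ s) / r ^ m - ∫ s in r₀..r, s * ψ s) / m

/-- The absolute value of the kernel `s * ((s / r) ^ m - 1)` of `m * radialPotential m · r₀ r`. -/
noncomputable def radialKernel (m : ℕ) (r s : ℝ) : ℝ := s * |(s / r) ^ m - 1|

@[simp]
lemma radialPotential_self : radialPotential m ψ r r = 0 := by
  simp [radialPotential]

lemma hasDerivAt_integral_of_continuousOn_Ioi {g : ℝ → ℝ} (hg : ContinuousOn g (Ioi ρ))
    (hr₀ : ρ < r₀) (hr : ρ < r) : HasDerivAt (fun t => ∫ s in r₀..t, g s) (g r) r :=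
  intervalIntegral.integral_hasDerivAt_right
    (hg.mono (ordConnected_Ioi.uIcc_subset hr₀ hr)).intervalIntegrable
    (hg.stronglyMeasurableAtFilter isOpen_Ioi r hr) (hg.continuousAt (Ioi_mem_nhds hr))

lemma isRadialSolution_radialPotential (hm : m ≠ 0) (hρ : 0 ≤ ρ) (hψ : ContinuousOn ψ (Ioi ρ))
    (hr₀ : ρ < r₀) : IsRadialSolution m ψ (radialPotential m ψ r₀) ρ := by
  have hflux : ∀ r > ρ,
      HasDerivAt (fun t => ∫ s in r₀..t, s ^ (m + 1) * ψ s) (r ^ (m + 1) * ψ r) r := fun r hr =>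
    hasDerivAt_integral_of_continuousOn_Ioi ((continuous_pow _).continuousOn.mul hψ) hr₀ hr
  refine ⟨_, fun r hr => ⟨?_, hflux r hr⟩⟩
  have hr' : r ≠ 0 := (hρ.trans_lt hr).ne'
  have hmoment : HasDerivAt (fun t => ∫ s in r₀..t, s * ψ s) (r * ψ r) r :=
    hasDerivAt_integral_of_continuousOn_Ioi (continuousOn_id.mul hψ) hr₀ hr
  refine ((((hflux r hr).div (hasDerivAt_pow m r) (pow_ne_zero m hr')).sub
    hmoment).div_const (m : ℝ)).congr_deriv ?_
  obtain ⟨n, rfl⟩ := Nat.exists_eq_succ_of_ne_zero hm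
  simp only [Nat.succ_eq_add_one, Nat.add_sub_cancel]
  field_simp
  ring

lemma mul_radialPotential (hm : m ≠ 0) (hψ : ContinuousOn ψ (Ioi ρ)) (hr₀ : ρ < r₀) (hr : ρ < r) :
    m * radialPotential m ψ r₀ r = ∫ s in r₀..r, s * ((s / r) ^ m - 1) * ψ s := by
  have hψ' : ContinuousOn ψ (uIcc r₀ r) := hψ.mono (ordConnected_Ioi.uIcc_subset hr₀ hr)
  rw [radialPotential, mul_div_cancel₀ _ (Nat.cast_ne_zero.2 hm), ← intervalIntegral.integral_div,
    ← intervalIntegral.integral_sub]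
  · refine intervalIntegral.integral_congr fun s _ => ?_
    simp only [div_pow]
    ring
  · exact ((continuous_pow _).continuousOn.mul hψ').intervalIntegrable.div_const _
  · exact (continuousOn_id.mul hψ').intervalIntegrable

lemma neg_mul_radialPotential (hm : m ≠ 0) (hρ : 0 ≤ ρ) (hψ : ContinuousOn ψ (Ioi ρ))
    (hr₀ : ρ < r₀) (hr : ρ < r) :
    -(m * radialPotential m ψ r₀ r) = ∫ s in Ι r₀ r, radialKernel m r s * ψ s := by
  have hr' : 0 < r := hρ.trans_lt hr
  rw [mul_radialPotential hm hψ hr₀ hr]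
  rcases le_total r₀ r with h | h
  · rw [uIoc_of_le h, intervalIntegral.integral_of_le h, ← integral_neg]
    refine setIntegral_congr_fun measurableSet_Ioc fun s hs => ?_
    have hs' : 0 ≤ s := (hρ.trans_lt (hr₀.trans hs.1)).le
    have hpow : (s / r) ^ m ≤ 1 := pow_le_one₀ (by positivity) ((div_le_one hr').2 hs.2)
    simp only [radialKernel, abs_of_nonpos (sub_nonpos.2 hpow)]
    ring
  · rw [uIoc_of_ge h, intervalIntegral.integral_of_ge h, neg_neg]
    refine setIntegral_congr_fun measurableSet_Ioc fun s hs => ?_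
    have hpow : 1 ≤ (s / r) ^ m := one_le_pow₀ ((one_le_div hr').2 hs.1.le)
    simp only [radialKernel, abs_of_nonneg (sub_nonneg.2 hpow)]

lemma radialKernel_nonneg (hs : 0 ≤ s) : 0 ≤ radialKernel m r s :=
  mul_nonneg hs (abs_nonneg _)

lemma sub_le_radialKernel (hm : m ≠ 0) (hr : 0 < r) (hrs : r ≤ s) : s - r ≤ radialKernel m r s := by
  have hdiv : 1 ≤ s / r := (one_le_div hr).2 hrs
  calc s - r = r * (s / r - 1) := by field_simp
    _ ≤ s * (s / r - 1) := mul_le_mul_of_nonneg_right hrs (sub_nonneg.2 hdiv)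
    _ ≤ s * ((s / r) ^ m - 1) := by gcongr; exacts [hr.le.trans hrs, le_self_pow₀ hdiv hm]
    _ ≤ radialKernel m r s := mul_le_mul_of_nonneg_left (le_abs_self _) (hr.le.trans hrs)

lemma le_two_mul_radialKernel (hm : m ≠ 0) (hs : 0 < s) (hrs : 2 * s ≤ r) :
    s ≤ 2 * radialKernel m r s := by
  have hr : 0 < r := by linarith
  have hpow : (s / r) ^ m ≤ 1 / 2 :=
    calc (s / r) ^ m
        ≤ s / r := pow_le_of_le_one (by positivity) ((div_le_one hr).2 (by linarith)) hm
      _ ≤ 1 / 2 := by rw [div_le_iff₀ hr]; linarith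
  have habs : 1 / 2 ≤ |(s / r) ^ m - 1| := by
    rw [abs_sub_comm]
    exact (by linarith : 1 / 2 ≤ 1 - (s / r) ^ m).trans (le_abs_self _)
  rw [radialKernel]
  nlinarith

lemma radialKernel_le_self (hs : 0 ≤ s) (hr : 0 < r) (hsr : s ≤ r) : radialKernel m r s ≤ s := by
  have hpow : (s / r) ^ m ≤ 1 := pow_le_one₀ (by positivity) ((div_le_one hr).2 hsr)
  have habs : |(s / r) ^ m - 1| ≤ 1 := by
    rw [abs_sub_comm, abs_of_nonneg (sub_nonneg.2 hpow)]
    linarith [pow_nonneg (div_nonneg hs hr.le) m]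
  exact mul_le_of_le_one_right hs habs

lemma radialKernel_le_mul_sub (hr : 0 < r) (hrs : r ≤ s) :
    radialKernel m r s ≤ m * (s / r) ^ m * (s - r) := by
  rcases m with _ | m
  · simp [radialKernel]
  have hdiv : 1 ≤ s / r := (one_le_div hr).2 hrs
  have hpow := abs_pow_sub_pow_le (s / r) 1 (m + 1)
  rw [one_pow, abs_one, abs_of_nonneg (sub_nonneg.2 hdiv), abs_of_nonneg (zero_le_one.trans hdiv),
    max_eq_left hdiv, Nat.add_sub_cancel] at hpow
  calc radialKernel (m + 1) r s
      ≤ s * ((s / r - 1) * ↑(m + 1) * (s / r) ^ m) :=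
        mul_le_mul_of_nonneg_left hpow (hr.le.trans hrs)
    _ = ↑(m + 1) * (s / r) ^ (m + 1) * (s - r) := by rw [pow_succ]; field_simp

lemma exists_radialKernel_le_mul_sub (m : ℕ) (hρ : 0 < ρ) :
    ∃ D ≥ 0, ∀ r > ρ, ∀ s ∈ Ι (ρ + 1) r, radialKernel m r s ≤ D * (s - ρ) := by
  refine ⟨max (1 + ρ) (m * ((ρ + 1) / ρ) ^ m), by positivity, fun r hr s hs => ?_⟩
  have hr' : 0 < r := hρ.trans hr
  rcases mem_uIoc.1 hs with ⟨h₁, h₂⟩ | ⟨h₁, h₂⟩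
  · calc radialKernel m r s ≤ s := radialKernel_le_self (by linarith) hr' h₂
      _ ≤ (1 + ρ) * (s - ρ) := by nlinarith
      _ ≤ _ := mul_le_mul_of_nonneg_right (le_max_left _ _) (by linarith)
  · have hs' : 0 ≤ s := by linarith
    have : 0 ≤ s - r := by linarith
    calc radialKernel m r s ≤ m * (s / r) ^ m * (s - r) := radialKernel_le_mul_sub hr' h₁.le
      _ ≤ m * ((ρ + 1) / ρ) ^ m * (s - ρ) := by gcongr
      _ ≤ _ := mul_le_mul_of_nonneg_right (le_max_right _ _) (by linarith)

@[fun_prop]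
lemma continuous_radialKernel : Continuous (radialKernel m r) := by
  unfold radialKernel
  fun_prop

lemma integrableOn_uIoc_mul {g : ℝ → ℝ} (hg : Continuous g) (hψ : ContinuousOn ψ (Ioi ρ))
    (hr₀ : ρ < r₀) (hr : ρ < r) : IntegrableOn (fun s => g s * ψ s) (Ι r₀ r) :=
  (hg.continuousOn.mul
    (hψ.mono (ordConnected_Ioi.uIcc_subset hr₀ hr))).intervalIntegrable.def'

lemma lt_of_mem_uIoc (hr₀ : ρ < r₀) (hr : ρ < r) (hs : s ∈ Ι r₀ r) : ρ < s :=
  (lt_min hr₀ hr).trans hs.1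

variable {a C : ℝ}

lemma radialPotential_nonpos (hm : m ≠ 0) (hρ : 0 ≤ ρ) (hψ : ContinuousOn ψ (Ioi ρ))
    (hψ₀ : ∀ s > ρ, 0 ≤ ψ s) (hr₀ : ρ < r₀) (hr : ρ < r) : radialPotential m ψ r₀ r ≤ 0 := by
  have hnonneg : 0 ≤ -(m * radialPotential m ψ r₀ r) := by
    rw [neg_mul_radialPotential hm hρ hψ hr₀ hr]
    refine setIntegral_nonneg measurableSet_uIoc fun s hs => ?_
    have hs' : ρ < s := lt_of_mem_uIoc hr₀ hr hs
    exact mul_nonneg (radialKernel_nonneg (hρ.trans hs'.le)) (hψ₀ s hs')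
  exact nonpos_of_mul_nonpos_right (neg_nonneg.1 hnonneg) (by positivity)

lemma setIntegral_sub_mul_le_radialPotential (hm : m ≠ 0) (hρ : 0 ≤ ρ)
    (hψ : ContinuousOn ψ (Ioi ρ)) (hψ₀ : ∀ s > ρ, 0 ≤ ψ s) (hr₀ : ρ < r₀) (ha : ρ < a) (hr : ρ < r)
    (hsub : Ι r₀ a ⊆ Ι r₀ r) (hker : ∀ s ∈ Ι r₀ a, s - ρ ≤ 2 * radialKernel m r s) :
    ∫ s in Ι r₀ a, (s - ρ) * ψ s ≤ 2 * (m * -radialPotential m ψ r₀ r) := by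
  have hkernel : IntegrableOn (fun s => 2 * (radialKernel m r s * ψ s)) (Ι r₀ r) :=
    Integrable.const_mul (integrableOn_uIoc_mul continuous_radialKernel hψ hr₀ hr) 2
  calc ∫ s in Ι r₀ a, (s - ρ) * ψ s
      ≤ ∫ s in Ι r₀ a, 2 * (radialKernel m r s * ψ s) := by
        refine setIntegral_mono_on (integrableOn_uIoc_mul (by fun_prop) hψ hr₀ ha)
          (hkernel.mono_set hsub) measurableSet_uIoc fun s hs => ?_
        rw [← mul_assoc]
        exact mul_le_mul_of_nonneg_right (hker s hs) (hψ₀ s (lt_of_mem_uIoc hr₀ ha hs))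
    _ ≤ ∫ s in Ι r₀ r, 2 * (radialKernel m r s * ψ s) := by
        refine setIntegral_mono_set hkernel ?_ hsub.eventuallyLE
        refine ae_restrict_of_forall_mem measurableSet_uIoc fun s hs => ?_
        have hs' : ρ < s := lt_of_mem_uIoc hr₀ hr hs
        exact mul_nonneg zero_le_two
          (mul_nonneg (radialKernel_nonneg (hρ.trans hs'.le)) (hψ₀ s hs'))
    _ = 2 * (m * -radialPotential m ψ r₀ r) := by
        rw [integral_const_mul, ← neg_mul_radialPotential hm hρ hψ hr₀ hr, mul_neg (m : ℝ)]

lemma integrableOn_Ioc_of_le_radialPotential (hm : m ≠ 0) (hρ : 0 ≤ ρ)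
    (hψ : ContinuousOn ψ (Ioi ρ)) (hψ₀ : ∀ s > ρ, 0 ≤ ψ s) (hr₀ : ρ < r₀)
    (hC : ∀ᶠ r in 𝓝[>] ρ, -C ≤ radialPotential m ψ r₀ r) :
    IntegrableOn (fun s => (s - ρ) * ψ s) (Ioc ρ r₀) := by
  have hseq : Tendsto (fun n : ℕ => ρ + 1 / ((n : ℝ) + 1)) atTop (𝓝 ρ) := by
    simpa using tendsto_one_div_add_atTop_nhds_zero_nat.const_add ρ
  have hseq_gt (n : ℕ) : ρ < ρ + 1 / ((n : ℝ) + 1) := lt_add_of_pos_right ρ (by positivity)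
  have hmid : Tendsto (fun n : ℕ => (ρ + (ρ + 1 / ((n : ℝ) + 1))) / 2) atTop (𝓝[>] ρ) := by
    refine tendsto_nhdsWithin_iff.2 ⟨?_, Eventually.of_forall fun n => ?_⟩
    · simpa using (hseq.const_add ρ).div_const 2
    · exact left_lt_add_div_two.2 (hseq_gt n)
  refine integrableOn_Ioc_of_intervalIntegral_norm_bounded_left (I := 2 * (m * C))
    (fun n => ?_) hseq ?_
  · exact (integrableOn_uIoc_mul (by fun_prop) hψ (hseq_gt n) hr₀).mono_set Ioc_subset_uIoc
  filter_upwards [hmid.eventually hC, hseq.eventually_lt_const hr₀] with n hn hnr₀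
  set a : ℝ := ρ + 1 / ((n : ℝ) + 1)
  have ha : ρ < a := hseq_gt n
  have hle := setIntegral_sub_mul_le_radialPotential hm hρ hψ hψ₀ hr₀ ha
    (left_lt_add_div_two.2 ha)
    (by rw [uIoc_of_ge hnr₀.le, uIoc_of_ge (by linarith)]; exact Ioc_subset_Ioc_left (by linarith))
    fun s hs => by
      rw [uIoc_of_ge hnr₀.le] at hs
      linarith [hs.1, sub_le_radialKernel hm (by linarith : 0 < (ρ + a) / 2)
        (by linarith [hs.1] : (ρ + a) / 2 ≤ s)]
  rw [uIoc_of_ge hnr₀.le] at hle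
  calc ∫ s in Ioc a r₀, ‖(s - ρ) * ψ s‖
      = ∫ s in Ioc a r₀, (s - ρ) * ψ s := setIntegral_congr_fun measurableSet_Ioc fun s hs =>
        Real.norm_of_nonneg (mul_nonneg (by linarith [hs.1]) (hψ₀ s (ha.trans hs.1)))
    _ ≤ 2 * (m * -radialPotential m ψ r₀ ((ρ + a) / 2)) := hle
    _ ≤ 2 * (m * C) := by gcongr; linarith

lemma integrableOn_Ioi_of_le_radialPotential (hm : m ≠ 0) (hρ : 0 ≤ ρ)
    (hψ : ContinuousOn ψ (Ioi ρ)) (hψ₀ : ∀ s > ρ, 0 ≤ ψ s) (hr₀ : ρ < r₀)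
    (hC : ∀ᶠ r in atTop, -C ≤ radialPotential m ψ r₀ r) :
    IntegrableOn (fun s => (s - ρ) * ψ s) (Ioi r₀) := by
  have hdouble : Tendsto (fun b : ℝ => 2 * b) atTop atTop := tendsto_id.const_mul_atTop two_pos
  refine integrableOn_Ioi_of_intervalIntegral_norm_bounded (I := 2 * (m * C)) (l := atTop)
    (b := id) r₀ (fun b => ?_) tendsto_id ?_
  · rcases le_total r₀ b with hb | hb
    · rw [id, ← uIoc_of_le hb]
      exact integrableOn_uIoc_mul (by fun_prop) hψ hr₀ (hr₀.trans_le hb)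
    · simp [hb]
  filter_upwards [hdouble.eventually hC, eventually_ge_atTop r₀] with b hb hr₀b
  have hρb : ρ < b := hr₀.trans_le hr₀b
  have hle := setIntegral_sub_mul_le_radialPotential hm hρ hψ hψ₀ hr₀ hρb (by linarith : ρ < 2 * b)
    (by rw [uIoc_of_le hr₀b, uIoc_of_le (by linarith)]; exact Ioc_subset_Ioc_right (by linarith))
    fun s hs => by
      rw [uIoc_of_le hr₀b] at hs
      linarith [le_two_mul_radialKernel hm (by linarith [hs.1] : 0 < s)
        (by linarith [hs.2] : 2 * s ≤ 2 * b)]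
  rw [uIoc_of_le hr₀b] at hle
  rw [id, intervalIntegral.integral_of_le hr₀b]
  calc ∫ s in Ioc r₀ b, ‖(s - ρ) * ψ s‖
      = ∫ s in Ioc r₀ b, (s - ρ) * ψ s := setIntegral_congr_fun measurableSet_Ioc fun s hs =>
        Real.norm_of_nonneg (mul_nonneg (by linarith [hs.1]) (hψ₀ s (hr₀.trans hs.1)))
    _ ≤ 2 * (m * -radialPotential m ψ r₀ (2 * b)) := hle
    _ ≤ 2 * (m * C) := by gcongr; linarith

lemma exists_le_radialPotential (hm : m ≠ 0) (hρ : 0 < ρ) (hψ : ContinuousOn ψ (Ioi ρ))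
    (hψ₀ : ∀ s > ρ, 0 ≤ ψ s) (hint : IntegrableOn (fun s => (s - ρ) * ψ s) (Ioi ρ)) :
    ∃ C, ∀ r > ρ, -C ≤ radialPotential m ψ (ρ + 1) r := by
  obtain ⟨D, hD₀, hD⟩ := exists_radialKernel_le_mul_sub m hρ
  refine ⟨(∫ s in Ioi ρ, D * ((s - ρ) * ψ s)) / m, fun r hr => ?_⟩
  have hr₀ : ρ < ρ + 1 := lt_add_one ρ
  have hsub : Ι (ρ + 1) r ⊆ Ioi ρ := fun s hs => lt_of_mem_uIoc hr₀ hr hs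
  have hintD : IntegrableOn (fun s => D * ((s - ρ) * ψ s)) (Ioi ρ) := hint.const_mul D
  have hle : -(m * radialPotential m ψ (ρ + 1) r) ≤ ∫ s in Ioi ρ, D * ((s - ρ) * ψ s) :=
    calc -(m * radialPotential m ψ (ρ + 1) r)
        = ∫ s in Ι (ρ + 1) r, radialKernel m r s * ψ s :=
          neg_mul_radialPotential hm hρ.le hψ hr₀ hr
      _ ≤ ∫ s in Ι (ρ + 1) r, D * ((s - ρ) * ψ s) := by
          refine setIntegral_mono_on (integrableOn_uIoc_mul continuous_radialKernel hψ hr₀ hr)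
            (hintD.mono_set hsub) measurableSet_uIoc fun s hs => ?_
          rw [← mul_assoc]
          exact mul_le_mul_of_nonneg_right (hD r hr s hs) (hψ₀ s (hsub hs))
      _ ≤ ∫ s in Ioi ρ, D * ((s - ρ) * ψ s) := by
          refine setIntegral_mono_set hintD ?_ hsub.eventuallyLE
          refine ae_restrict_of_forall_mem measurableSet_Ioi fun s hs => ?_
          exact mul_nonneg hD₀ (mul_nonneg (sub_nonneg.2 (le_of_lt hs)) (hψ₀ s hs))
  rw [neg_le, le_div_iff₀ (by positivity)]
  linarith

end Radial

section Supersolution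

section Annulus

variable {F : Type*} [NormedAddCommGroup F] {c : F} {r₀ r₁ : ℝ}

/-- The closed region between the spheres of centre `c` and radii `a` and `b`, in either order. -/
def closedAnnulus (c : F) (a b : ℝ) : Set F :=
  {x | ‖x - c‖ ∈ uIcc a b}

lemma frontier_closedAnnulus_subset :
    frontier (closedAnnulus c r₀ r₁) ⊆ {x | ‖x - c‖ = r₀ ∨ ‖x - c‖ = r₁} := by
  have hnorm : Continuous fun x => ‖x - c‖ := by fun_prop
  refine (hnorm.frontier_preimage_subset (uIcc r₀ r₁)).trans fun x hx => ?_
  rw [mem_preimage, uIcc, frontier_Icc min_le_max] at hx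
  rcases le_total r₀ r₁ with h | h <;> simp_all [or_comm]

lemma isCompact_closedAnnulus [ProperSpace F] : IsCompact (closedAnnulus c r₀ r₁) := by
  refine (isCompact_closedBall c (max r₀ r₁)).of_isClosed_subset
    (isClosed_Icc.preimage (by fun_prop)) fun x hx => ?_
  rw [mem_closedBall, dist_eq_norm]
  exact hx.2

end Annulus

variable [FiniteDimensional ℝ E]

/-- The `C²` positive solutions `u` of the inequality `-Δ u ≥ a(x) f(u)` on `Ω`. -/
def IsPosSupersolutionOn (a : E → ℝ) (f : ℝ → ℝ) (u : E → ℝ) (Ω : Set E) : Prop :=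
  ContDiffOn ℝ 2 u Ω ∧ ∀ x ∈ Ω, 0 < u x ∧ a x * f (u x) ≤ -Δ u x

variable {m : ℕ} {a b u v : E → ℝ} {c x : E} {f ψ w : ℝ → ℝ} {Ω Ω' A : Set E}
  {ρ r₀ r₁ r T Λ B : ℝ}

namespace IsPosSupersolutionOn

lemma mono (hu : IsPosSupersolutionOn a f u Ω) (hsub : Ω' ⊆ Ω) (hba : ∀ x ∈ Ω', b x ≤ a x)
    (hfpos : ∀ t > 0, 0 < f t) : IsPosSupersolutionOn b f u Ω' := by
  refine ⟨hu.1.mono hsub, fun x hx => ⟨(hu.2 x (hsub hx)).1, ?_⟩⟩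
  obtain ⟨hpos, hle⟩ := hu.2 x (hsub hx)
  exact (mul_le_mul_of_nonneg_right (hba x hx) (hfpos _ hpos).le).trans hle

lemma le_of_le_frontier (hu : IsPosSupersolutionOn a f u Ω) (hΩ : IsOpen Ω)
    (hf : AntitoneOn f (Ioi 0)) (hA : IsCompact A) (hAΩ : A ⊆ Ω) (ha : ∀ x ∈ A, 0 < a x)
    (hv : ∀ x ∈ A, ContDiffAt ℝ 2 v x) (hΔv : ∀ x ∈ A, -Δ v x ≤ Λ * a x) (hΛ : Λ < f T)
    (hvT : ∀ x ∈ A, v x ≤ T) (hfrontier : ∀ x ∈ frontier A, v x ≤ u x) (hx : x ∈ A) :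
    v x ≤ u x := by
  refine le_of_laplacian_lt_of_le_frontier hA
    (fun y hy => hu.1.contDiffAt (hΩ.mem_nhds (hAΩ hy))) hv hfrontier (fun y hy hlt => ?_) hx
  obtain ⟨hpos, hle⟩ := hu.2 y (hAΩ hy)
  have huT : u y ≤ T := hlt.le.trans (hvT y hy)
  have hfu : f T ≤ f (u y) := hf hpos (hpos.trans_le huT) huT
  linarith [hΔv y hy, mul_lt_mul_of_pos_right (hΛ.trans_le hfu) (ha y hy)]

variable (hu : IsPosSupersolutionOn (fun x => ψ ‖x - c‖) f u Ω) (hΩ : IsOpen Ω)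
  (hdim : finrank ℝ E = m + 2) (hf : AntitoneOn f (Ioi 0)) (hψ : ContinuousOn ψ (Ioi ρ))
  (hψpos : ∀ r > ρ, 0 < ψ r)

include hu hΩ hdim hf hψ hψpos

lemma le_of_isRadialSolution (hρ : 0 ≤ ρ) (hw : IsRadialSolution m (Λ • ψ) w ρ) (hΛ : Λ < f T)
    (hr₀ : ρ < r₀) (hr₁ : ρ < r₁) (hA : closedAnnulus c r₀ r₁ ⊆ Ω)
    (hwT : ∀ r ∈ uIcc r₀ r₁, w r ≤ T) (hw₀ : w r₀ ≤ 0) (hw₁ : w r₁ ≤ 0)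
    (hx : x ∈ closedAnnulus c r₀ r₁) : w ‖x - c‖ ≤ u x := by
  have hgt : ∀ y ∈ closedAnnulus c r₀ r₁, ρ < ‖y - c‖ := fun y hy =>
    ordConnected_Ioi.uIcc_subset hr₀ hr₁ hy
  refine hu.le_of_le_frontier hΩ hf isCompact_closedAnnulus hA (fun y hy => hψpos _ (hgt y hy))
    (fun y hy => hw.contDiffAt_comp_norm_sub hρ (hψ.const_smul Λ) (hgt y hy))
    (fun y hy => ?_) hΛ (fun y hy => hwT _ hy) (fun y hy => ?_) hx
  · simp [hw.laplacian_comp_norm_sub hdim hρ (hgt y hy)]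
  · have hyΩ : y ∈ Ω := hA (isCompact_closedAnnulus.isClosed.frontier_subset hy)
    refine le_trans ?_ (hu.2 y hyΩ).1.le
    rcases frontier_closedAnnulus_subset hy with h | h <;> rwa [h]

variable (hm : m ≠ 0) (hρ : 0 < ρ) (hfpos : ∀ t > 0, 0 < f t)

include hm hρ hfpos

lemma exists_le_radialPotential (hr₀ : ρ < r₀) (hr : ρ < r) (hB : 0 < B * (1 - (r₀ / r) ^ m)) :
    ∃ C, ∀ r₁ > ρ, r ∈ uIcc r₀ r₁ → closedAnnulus c r₀ r₁ ⊆ Ω →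
      (∀ s ∈ uIcc r₀ r₁, B * (1 - (r₀ / s) ^ m) ≤ 1) → -C ≤ radialPotential m ψ r₀ r₁ := by
  have : Nontrivial E := nontrivial_of_finrank_pos (R := ℝ) (by omega)
  obtain ⟨y, hy⟩ : ∃ y : E, ‖y - c‖ = r := by
    obtain ⟨z, hz⟩ := exists_norm_eq E (hρ.trans hr).le
    exact ⟨z + c, by simpa using hz⟩
  set p := radialPotential m ψ r₀
  set h : ℝ → ℝ := fun s => B * (1 - (r₀ / s) ^ m)
  set T := max 1 ((u y - f 1 / 2 * p r + 1) / h r)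
  have hT : 0 < T := one_pos.trans_le (le_max_left _ _)
  have hfT : f T ≤ f 1 := hf (mem_Ioi.2 one_pos) (mem_Ioi.2 hT) (le_max_left _ _)
  have hp : ∀ s > ρ, p s ≤ 0 := fun s hs =>
    radialPotential_nonpos hm hρ.le hψ (fun s hs => (hψpos s hs).le) hr₀ hs
  have hw : IsRadialSolution m ((f T / 2) • ψ) ((f T / 2) • p + T • h) ρ := by
    simpa using ((isRadialSolution_radialPotential hm hρ.le hψ hr₀).const_smul (f T / 2)).add
      ((isRadialSolution_one_sub_div_pow B hρ.le).const_smul T)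
  refine ⟨2 * T / f T, fun r₁ hr₁ hmem hA hle => ?_⟩
  by_contra! hlt
  have hyA : y ∈ closedAnnulus c r₀ r₁ := by rwa [closedAnnulus, mem_ofPred, hy]
  have hpr₁ : f T / 2 * p r₁ ≤ -T :=
    calc f T / 2 * p r₁ ≤ f T / 2 * -(2 * T / f T) :=
          mul_le_mul_of_nonneg_left hlt.le (half_pos (hfpos T hT)).le
      _ = -T := by field_simp [(hfpos T hT).ne']
  have hyw := le_of_isRadialSolution hu hΩ hdim hf hψ hψpos hρ.le hw
    (half_lt_self (hfpos T hT)) hr₀ hr₁ hA (fun s hs => ?_) ?_ ?_ hyA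
  · simp only [hy, Pi.add_apply, Pi.smul_apply, smul_eq_mul] at hyw
    have hTh : u y - f 1 / 2 * p r + 1 ≤ T * h r := (div_le_iff₀ hB).1 (le_max_right _ _)
    nlinarith [hp r hr]
  · simp only [Pi.add_apply, Pi.smul_apply, smul_eq_mul]
    nlinarith [hp s (ordConnected_Ioi.uIcc_subset hr₀ hr₁ hs), hle s hs, hfpos T hT]
  · simp [p, h, (hρ.trans hr₀).ne']
  · simp only [Pi.add_apply, Pi.smul_apply, smul_eq_mul]
    nlinarith [hle r₁ right_mem_uIcc]

lemma integrableOn_Ioc (hr₀ : ρ < r₀) (hA : {x | ‖x - c‖ ∈ Ioc ρ r₀} ⊆ Ω) :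
    IntegrableOn (fun s => (s - ρ) * ψ s) (Ioc ρ r₀) := by
  have hr₀' : 0 < r₀ := hρ.trans hr₀
  have hpow : 0 < (r₀ / ρ) ^ m - 1 := sub_pos.2 (one_lt_pow₀ ((one_lt_div hρ).2 hr₀) hm)
  obtain ⟨r, hρr, hrr₀⟩ := exists_between hr₀
  have hB : 0 < -((r₀ / ρ) ^ m - 1)⁻¹ * (1 - (r₀ / r) ^ m) := by
    have : 1 < (r₀ / r) ^ m := one_lt_pow₀ ((one_lt_div (hρ.trans hρr)).2 hrr₀) hm
    exact mul_pos_of_neg_of_neg (neg_lt_zero.2 (inv_pos.2 hpow)) (sub_neg.2 this)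
  obtain ⟨C, hC⟩ := exists_le_radialPotential hu hΩ hdim hf hψ hψpos hm hρ hfpos hr₀ hρr hB
  refine integrableOn_Ioc_of_le_radialPotential (C := C) hm hρ.le hψ (fun s hs => (hψpos s hs).le)
    hr₀ ?_
  filter_upwards [Ioo_mem_nhdsGT hρr] with r₁ hr₁
  have hr₁r₀ : r₁ ≤ r₀ := (hr₁.2.trans hrr₀).le
  refine hC r₁ hr₁.1 ?_ (fun x hx => hA ?_) fun s hs => ?_
  · rw [uIcc_of_ge hr₁r₀]
    exact ⟨hr₁.2.le, hrr₀.le⟩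
  · rw [closedAnnulus, uIcc_of_ge hr₁r₀] at hx
    exact ⟨hr₁.1.trans_le hx.1, hx.2⟩
  · rw [uIcc_of_ge hr₁r₀] at hs
    have hρs : ρ ≤ s := hr₁.1.le.trans hs.1
    have hs₀ : 0 < s := hρ.trans_le hρs
    have : (r₀ / s) ^ m ≤ (r₀ / ρ) ^ m := by gcongr
    rw [neg_mul, ← mul_neg, neg_sub, inv_mul_le_one₀ hpow]
    linarith

lemma integrableOn_Ioi (hr₀ : ρ < r₀) (hA : {x | r₀ ≤ ‖x - c‖} ⊆ Ω) :
    IntegrableOn (fun s => (s - ρ) * ψ s) (Ioi r₀) := by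
  have hr₀' : 0 < r₀ := hρ.trans hr₀
  have hB : 0 < 1 * (1 - (r₀ / (r₀ + 1)) ^ m) := by
    rw [one_mul, sub_pos]
    exact pow_lt_one₀ (by positivity) ((div_lt_one (by positivity)).2 (lt_add_one r₀)) hm
  obtain ⟨C, hC⟩ := exists_le_radialPotential hu hΩ hdim hf hψ hψpos hm hρ hfpos hr₀
    (hr₀.trans (lt_add_one r₀)) hB
  refine integrableOn_Ioi_of_le_radialPotential (C := C) hm hρ.le hψ (fun s hs => (hψpos s hs).le)
    hr₀ ?_
  filter_upwards [eventually_ge_atTop (r₀ + 1)] with r₁ hr₁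
  have hr₀r₁ : r₀ ≤ r₁ := by linarith
  refine hC r₁ (hr₀.trans_le hr₀r₁) ?_ (fun x hx => hA ?_) fun s hs => ?_
  · rw [uIcc_of_le hr₀r₁]
    exact ⟨by linarith, hr₁⟩
  · rw [closedAnnulus, uIcc_of_le hr₀r₁] at hx
    exact hx.1
  · rw [uIcc_of_le hr₀r₁] at hs
    have hs₀ : 0 ≤ s := hr₀'.le.trans hs.1
    rw [one_mul]
    linarith [pow_nonneg (div_nonneg hr₀'.le hs₀) m]

lemma integrableOn_Ioi_sub_mul {ε R : ℝ} (hε : 0 < ε) (hnear : {x | ‖x - c‖ ∈ Ioc ρ (ρ + ε)} ⊆ Ω)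
    (hfar : {x | R ≤ ‖x - c‖} ⊆ Ω) : IntegrableOn (fun s => (s - ρ) * ψ s) (Ioi ρ) := by
  set R' := max R (ρ + ε)
  have hρε : ρ < ρ + ε := lt_add_of_pos_right ρ hε
  have hρR : ρ < R' := hρε.trans_le (le_max_right _ _)
  have hmid : IntegrableOn (fun s => (s - ρ) * ψ s) (Ioc (ρ + ε) R') :=
    (integrableOn_uIoc_mul (by fun_prop) hψ hρε hρR).mono_set Ioc_subset_uIoc
  rw [← Ioc_union_Ioi_eq_Ioi hρR.le, ← Ioc_union_Ioc_eq_Ioc hρε.le (le_max_right R (ρ + ε))]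
  exact ((integrableOn_Ioc hu hΩ hdim hf hψ hψpos hm hρ hfpos hρε hnear).union hmid).union
    (integrableOn_Ioi hu hΩ hdim hf hψ hψpos hm hρ hfpos hρR
      fun x hx => hfar ((le_max_left _ _).trans (show R' ≤ ‖x - c‖ from hx)))

end IsPosSupersolutionOn

lemma exists_isRadialSolution_one_le (hm : m ≠ 0) (hρ : 0 < ρ) (hψ : ContinuousOn ψ (Ioi ρ))
    (hψ₀ : ∀ r > ρ, 0 ≤ ψ r) (hint : IntegrableOn (fun s => (s - ρ) * ψ s) (Ioi ρ)) (hΛ : 0 ≤ Λ) :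
    ∃ w, IsRadialSolution m (Λ • ψ) w ρ ∧ ∀ r > ρ, 1 ≤ w r := by
  obtain ⟨C, hC⟩ := exists_le_radialPotential hm hρ hψ hψ₀ hint
  have hpotential := isRadialSolution_radialPotential hm hρ.le hψ (lt_add_one ρ)
  refine ⟨Λ • radialPotential m ψ (ρ + 1) + fun _ => Λ * C + 1, ?_, fun r hr => ?_⟩
  · simpa using (hpotential.const_smul Λ).add (IsRadialSolution.const (Λ * C + 1))
  · simp only [Pi.add_apply, Pi.smul_apply, smul_eq_mul]
    linarith [mul_le_mul_of_nonneg_left (hC r hr) hΛ]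

lemma exists_isPosSupersolutionOn_sum {ι : Type*} [Fintype ι] [Nonempty ι] {c : ι → E} {ρ : ι → ℝ}
    {ψ : ι → ℝ → ℝ} (hdim : finrank ℝ E = m + 2) (hm : m ≠ 0) (hρ : ∀ i, 0 < ρ i)
    (hψ : ∀ i, ContinuousOn (ψ i) (Ioi (ρ i))) (hψ₀ : ∀ i, ∀ r > ρ i, 0 ≤ ψ i r)
    (hint : ∀ i, IntegrableOn (fun s => (s - ρ i) * ψ i s) (Ioi (ρ i)))
    (hΩ : ∀ x ∈ Ω, ∀ i, ρ i < ‖x - c i‖) (hf : AntitoneOn f (Ioi 0)) (hf₁ : 0 ≤ f 1) :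
    ∃ u, IsPosSupersolutionOn (fun x => ∑ i, ψ i ‖x - c i‖) f u Ω := by
  choose w hw hw₁ using fun i =>
    exists_isRadialSolution_one_le hm (hρ i) (hψ i) (hψ₀ i) (hint i) hf₁
  have hdiff : ∀ x ∈ Ω, ∀ i, ContDiffAt ℝ 2 (fun y => w i ‖y - c i‖) x := fun x hx i =>
    (hw i).contDiffAt_comp_norm_sub (hρ i).le ((hψ i).const_smul (f 1)) (hΩ x hx i)
  refine ⟨fun x => ∑ i, w i ‖x - c i‖, fun x hx =>
    (ContDiffAt.sum fun i _ => hdiff x hx i).contDiffWithinAt, fun x hx => ?_⟩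
  have hone : 1 ≤ ∑ i, w i ‖x - c i‖ := by
    obtain ⟨i⟩ := ‹Nonempty ι›
    have hw₀ : ∀ j ∈ Finset.univ, 0 ≤ w j ‖x - c j‖ := fun j _ =>
      zero_le_one.trans (hw₁ j _ (hΩ x hx j))
    exact (hw₁ i _ (hΩ x hx i)).trans (Finset.single_le_sum hw₀ (Finset.mem_univ i))
  have hpos : 0 < ∑ i, w i ‖x - c i‖ := one_pos.trans_le hone
  have hlap (i) : Δ (fun y => w i ‖y - c i‖) x = -(f 1 * ψ i ‖x - c i‖) :=
    (hw i).laplacian_comp_norm_sub hdim (hρ i).le (hΩ x hx i)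
  refine ⟨hpos, ?_⟩
  calc (∑ i, ψ i ‖x - c i‖) * f (∑ i, w i ‖x - c i‖) ≤ (∑ i, ψ i ‖x - c i‖) * f 1 :=
        mul_le_mul_of_nonneg_left (hf (mem_Ioi.2 one_pos) (mem_Ioi.2 hpos) hone)
          (Finset.sum_nonneg fun i _ => hψ₀ i _ (hΩ x hx i))
    _ = -Δ (fun y => ∑ i, w i ‖y - c i‖) x := by
        rw [Finset.sum_mul, laplacian_finsetSum fun i _ => hdiff x hx i]
        simp only [hlap, Finset.sum_neg_distrib, neg_neg, mul_comm]

end Supersolution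

section Balls

variable {F ι : Type*} [NormedAddCommGroup F] {x : F}

lemma exists_infDist_eq_infDist_iUnion [Finite ι] [Nonempty ι] (s : ι → Set F) (x : F) :
    ∃ i, infDist x (s i) = infDist x (⋃ i, s i) := by
  obtain ⟨i, hi⟩ := exists_eq_ciInf_of_finite (f := fun i => infEDist x (s i))
  exact ⟨i, by rw [infDist, infDist, infEDist_iUnion, hi]⟩

lemma lt_norm_sub_of_mem_compl_iUnion_closedBall {c : ι → F} {ρ : ι → ℝ}
    (hx : x ∈ (⋃ i, closedBall (c i) (ρ i))ᶜ) (i : ι) : ρ i < ‖x - c i‖ := by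
  simp only [mem_compl_iff, mem_iUnion, mem_closedBall, dist_eq_norm, not_exists, not_le] at hx
  exact hx i

variable [NormedSpace ℝ F]

lemma infDist_closedBall {c : F} {ρ : ℝ} (hρ : 0 ≤ ρ) (hx : ρ < ‖x - c‖) :
    infDist x (closedBall c ρ) = ‖x - c‖ - ρ := by
  have hx₀ : 0 < ‖x - c‖ := hρ.trans_lt hx
  refine le_antisymm ?_ ((le_infDist (nonempty_closedBall.2 hρ)).2 fun y hy => ?_)
  · have hy : AffineMap.lineMap c x (ρ / ‖x - c‖) ∈ closedBall c ρ := by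
      rw [mem_closedBall, dist_lineMap_left, dist_comm c, dist_eq_norm,
        Real.norm_of_nonneg (by positivity), div_mul_cancel₀ _ hx₀.ne']
    refine (infDist_le_dist_of_mem hy).trans_eq ?_
    rw [dist_comm, dist_lineMap_right, dist_comm c, dist_eq_norm,
      Real.norm_of_nonneg (sub_nonneg.2 ((div_le_one hx₀).2 hx.le)), sub_mul, one_mul,
      div_mul_cancel₀ _ hx₀.ne']
  · rw [mem_closedBall] at hy
    linarith [dist_triangle x y c, dist_eq_norm x c]

lemma exists_infDist_iUnion_closedBall_eq [Finite ι] [Nonempty ι] {c : ι → F} {ρ : ι → ℝ}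
    (hρ : ∀ i, 0 ≤ ρ i) (hx : x ∈ (⋃ i, closedBall (c i) (ρ i))ᶜ) :
    ∃ i, infDist x (⋃ i, closedBall (c i) (ρ i)) = ‖x - c i‖ - ρ i := by
  obtain ⟨i, hi⟩ := exists_infDist_eq_infDist_iUnion (fun i => closedBall (c i) (ρ i)) x
  exact ⟨i, hi ▸ infDist_closedBall (hρ i) (lt_norm_sub_of_mem_compl_iUnion_closedBall hx i)⟩

lemma exists_annulus_subset_compl_iUnion_closedBall [Finite ι] [ProperSpace F] {c : ι → F}
    {ρ : ι → ℝ} {i : ι} (hρ : 0 ≤ ρ i)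
    (hdisj : ∀ j ≠ i, Disjoint (closedBall (c i) (ρ i)) (closedBall (c j) (ρ j))) :
    ∃ ε > 0, {x | ‖x - c i‖ ∈ Ioc (ρ i) (ρ i + ε)} ⊆ (⋃ j, closedBall (c j) (ρ j))ᶜ := by
  have hopen : IsOpen (⋃ j : {j // j ≠ i}, closedBall (c j) (ρ j))ᶜ :=
    (isClosed_iUnion_of_finite fun _ => isClosed_closedBall).isOpen_compl
  have hsub : closedBall (c i) (ρ i) ⊆ (⋃ j : {j // j ≠ i}, closedBall (c j) (ρ j))ᶜ :=
    subset_compl_iff_disjoint_right.2 (disjoint_iUnion_right.2 fun j => hdisj j j.2)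
  obtain ⟨ε, hε, hthick⟩ := (isCompact_closedBall (c i) (ρ i)).exists_cthickening_subset_open
    hopen hsub
  rw [cthickening_closedBall hε.le hρ] at hthick
  refine ⟨ε, hε, fun x hx hxK => ?_⟩
  obtain ⟨j, hj⟩ := mem_iUnion.1 hxK
  rcases eq_or_ne j i with rfl | hji
  · exact hx.1.not_ge (mem_closedBall_iff_norm.1 hj)
  · refine hthick (mem_closedBall_iff_norm.2 ?_) (mem_iUnion.2 ⟨⟨j, hji⟩, hj⟩)
    linarith [hx.2]

end Balls

section Antitone

variable {φ ψ : ℝ → ℝ} {ρ : ℝ}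

lemma intervalIntegrable_of_antitoneOn_Ioi {a b : ℝ} (hφ : AntitoneOn φ (Ioi ρ)) (ha : ρ < a)
    (hb : ρ < b) : IntervalIntegrable φ volume a b :=
  (hφ.mono (ordConnected_Ioi.uIcc_subset ha hb)).intervalIntegrable

lemma continuousOn_primitive_of_antitoneOn_Ioi {a : ℝ} (hφ : AntitoneOn φ (Ioi ρ)) (ha : ρ < a) :
    ContinuousOn (fun r => ∫ t in a..r, φ t) (Ioi ρ) := by
  intro r hr
  obtain ⟨b, hρb, hbr⟩ := exists_between (mem_Ioi.1 hr)
  have hcont : ContinuousWithinAt (fun r => ∫ t in a..r, φ t) (Icc b (r + 1)) r :=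
    intervalIntegral.continuousWithinAt_primitive (measure_singleton r)
      (intervalIntegrable_of_antitoneOn_Ioi hφ (lt_min ha hρb) (lt_max_of_lt_left ha))
  exact (hcont.continuousAt (Icc_mem_nhds hbr (lt_add_one r))).continuousWithinAt

lemma exists_continuousOn_between_of_antitoneOn_Ioi (hφ : AntitoneOn φ (Ioi 0)) :
    ∃ ψ, ContinuousOn ψ (Ioi 0) ∧ ∀ r > 0, ψ r ∈ Icc (φ (2 * r)) (φ r) := by
  have hprim := continuousOn_primitive_of_antitoneOn_Ioi hφ one_pos
  have hdouble : ContinuousOn (fun r => ∫ t in (1 : ℝ)..2 * r, φ t) (Ioi 0) :=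
    hprim.comp (by fun_prop) fun r hr => mul_pos two_pos (mem_Ioi.1 hr)
  refine ⟨fun r => ((∫ t in (1 : ℝ)..2 * r, φ t) - ∫ t in (1 : ℝ)..r, φ t) / r,
    (hdouble.sub hprim).div continuousOn_id fun r hr => (mem_Ioi.1 hr).ne', fun r hr => ?_⟩
  have hr₂ : r ≤ 2 * r := by linarith
  have hr₂' : 0 < 2 * r := hr.trans_le hr₂
  have hint : ∀ {b}, 0 < b → IntervalIntegrable φ volume 1 b :=
    intervalIntegrable_of_antitoneOn_Ioi hφ one_pos
  have hφr := intervalIntegrable_of_antitoneOn_Ioi hφ hr hr₂'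
  have hlower : r * φ (2 * r) ≤ ∫ t in r..2 * r, φ t := by
    have := intervalIntegral.integral_mono_on hr₂ intervalIntegrable_const hφr fun t ht =>
      hφ (hr.trans_le ht.1) hr₂' ht.2
    rw [intervalIntegral.integral_const, smul_eq_mul] at this
    linarith
  have hupper : ∫ t in r..2 * r, φ t ≤ r * φ r := by
    have := intervalIntegral.integral_mono_on hr₂ hφr intervalIntegrable_const fun t ht =>
      hφ hr (hr.trans_le ht.1) ht.1
    rw [intervalIntegral.integral_const, smul_eq_mul] at this
    linarith
  rw [← intervalIntegral.integral_interval_sub_left (hint hr₂') (hint hr)] at hlower hupper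
  exact ⟨(le_div_iff₀' hr).2 hlower, (div_le_iff₀' hr).2 hupper⟩

lemma integrableOn_Ioi_id_mul_comp_mul_left_iff {a : ℝ} (ha : 0 < a) :
    IntegrableOn (fun r => r * φ (a * r)) (Ioi 0) ↔ IntegrableOn (fun r => r * φ r) (Ioi 0) := by
  have hscale := integrableOn_Ioi_comp_mul_left_iff (fun r => r * φ r) 0 ha
  simp only [mul_zero, mul_assoc] at hscale
  rw [← hscale, IntegrableOn, IntegrableOn, integrable_const_mul_iff ha.ne'.isUnit]

lemma integrableOn_Ioi_sub_mul_comp_sub_iff :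
    IntegrableOn (fun s => (s - ρ) * φ (s - ρ)) (Ioi ρ) ↔
      IntegrableOn (fun r => r * φ r) (Ioi 0) := by
  have hshift := (measurePreserving_sub_right volume ρ).integrableOn_comp_preimage
    (MeasurableEquiv.subRight ρ).measurableEmbedding (f := fun r => r * φ r) (s := Ioi 0)
  rwa [preimage_sub_const_Ioi, zero_add] at hshift

lemma integrableOn_id_mul_of_le (hφ : AEMeasurable φ (volume.restrict (Ioi 0)))
    (hφ₀ : ∀ r > 0, 0 ≤ φ r) (hle : ∀ r > 0, φ r ≤ ψ r)
    (hψ : IntegrableOn (fun r => r * ψ r) (Ioi 0)) : IntegrableOn (fun r => r * φ r) (Ioi 0) := by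
  refine hψ.mono' (aemeasurable_id.mul hφ).aestronglyMeasurable
    (ae_restrict_of_forall_mem measurableSet_Ioi fun r hr => ?_)
  rw [Real.norm_of_nonneg (mul_nonneg (le_of_lt hr) (hφ₀ r hr))]
  exact mul_le_mul_of_nonneg_left (hle r hr) (le_of_lt hr)

end Antitone

section Main

variable [FiniteDimensional ℝ E] {ι : Type*} [Finite ι] {c : ι → E} {ρ : ι → ℝ} {φ f : ℝ → ℝ}

lemma IsPosSupersolutionOn.comp_norm_sub {u : E → ℝ} {i : ι} {ψ : ℝ → ℝ}
    (hu : IsPosSupersolutionOn (fun x => φ (infDist x (⋃ i, closedBall (c i) (ρ i)))) f u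
      (⋃ i, closedBall (c i) (ρ i))ᶜ)
    (hρ : 0 ≤ ρ i) (hφ : AntitoneOn φ (Ioi 0)) (hψφ : ∀ r > 0, ψ r ≤ φ r)
    (hfpos : ∀ t > 0, 0 < f t) :
    IsPosSupersolutionOn (fun x => ψ (‖x - c i‖ - ρ i)) f u (⋃ i, closedBall (c i) (ρ i))ᶜ := by
  refine hu.mono subset_rfl (fun x hx => ?_) hfpos
  set K := ⋃ i, closedBall (c i) (ρ i)
  have hball : closedBall (c i) (ρ i) ⊆ K := subset_iUnion (fun i => closedBall (c i) (ρ i)) i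
  have hne : (closedBall (c i) (ρ i)).Nonempty := nonempty_closedBall.2 hρ
  have hclosed : IsClosed K := isClosed_iUnion_of_finite fun _ => isClosed_closedBall
  have hxi : ρ i < ‖x - c i‖ := lt_norm_sub_of_mem_compl_iUnion_closedBall hx i
  have hpos : 0 < infDist x K := (hclosed.notMem_iff_infDist_pos (hne.mono hball)).1 hx
  have hdist : infDist x K ≤ ‖x - c i‖ - ρ i :=
    (infDist_le_infDist_of_subset hball hne).trans_eq (infDist_closedBall hρ hxi)
  exact (hψφ _ (sub_pos.2 hxi)).trans (hφ hpos (hpos.trans_le hdist) hdist)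

lemma IsPosSupersolutionOn.integrableOn_id_mul {u : E → ℝ} {i : ι}
    (hu : IsPosSupersolutionOn (fun x => φ (infDist x (⋃ i, closedBall (c i) (ρ i)))) f u
      (⋃ i, closedBall (c i) (ρ i))ᶜ)
    (hdim : 3 ≤ finrank ℝ E) (hρ : 0 < ρ i)
    (hdisj : ∀ j ≠ i, Disjoint (closedBall (c i) (ρ i)) (closedBall (c j) (ρ j)))
    (hφpos : ∀ r > 0, 0 < φ r) (hφ : AntitoneOn φ (Ioi 0)) (hf : AntitoneOn f (Ioi 0))
    (hfpos : ∀ t > 0, 0 < f t) : IntegrableOn (fun r => r * φ r) (Ioi 0) := by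
  obtain ⟨m, hm⟩ := Nat.exists_eq_add_of_le' hdim
  obtain ⟨ψ, hψ, hφψ⟩ := exists_continuousOn_between_of_antitoneOn_Ioi hφ
  have hψpos : ∀ r > 0, 0 < ψ r := fun r hr =>
    (hφpos (2 * r) (by positivity)).trans_le (hφψ r hr).1
  set K := ⋃ i, closedBall (c i) (ρ i)
  have hopen : IsOpen Kᶜ :=
    (isClosed_iUnion_of_finite fun _ => isClosed_closedBall).isOpen_compl
  have hbounded : Bornology.IsBounded K :=
    Bornology.isBounded_iUnion.2 fun _ => isBounded_closedBall
  obtain ⟨ε, hε, hnear⟩ := exists_annulus_subset_compl_iUnion_closedBall hρ.le hdisj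
  obtain ⟨R, hR⟩ := hbounded.subset_ball (c i)
  have hfar : {x | R ≤ ‖x - c i‖} ⊆ Kᶜ := fun x hx hxK =>
    (mem_ball_iff_norm.1 (hR hxK)).not_ge hx
  have hshift : IntegrableOn (fun s => (s - ρ i) * ψ (s - ρ i)) (Ioi (ρ i)) :=
    (hu.comp_norm_sub hρ.le hφ (fun r hr => (hφψ r hr).2) hfpos).integrableOn_Ioi_sub_mul
      (ψ := fun s => ψ (s - ρ i)) hopen hm hf
      (hψ.comp (by fun_prop) fun s hs => mem_Ioi.2 (sub_pos.2 hs))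
      (fun s hs => hψpos _ (sub_pos.2 hs)) m.succ_ne_zero hρ hfpos hε hnear hfar
  have hdouble : AntitoneOn (fun r => φ (2 * r)) (Ioi 0) := fun r hr s hs hrs =>
    hφ (mem_Ioi.2 (mul_pos two_pos hr)) (mem_Ioi.2 (mul_pos two_pos hs)) (by linarith)
  rw [← integrableOn_Ioi_id_mul_comp_mul_left_iff two_pos]
  exact integrableOn_id_mul_of_le (aemeasurable_restrict_of_antitoneOn measurableSet_Ioi hdouble)
    (fun r hr => (hφpos (2 * r) (by positivity)).le) (fun r hr => (hφψ r hr).1)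
    (integrableOn_Ioi_sub_mul_comp_sub_iff.1 hshift)

lemma exists_isPosSupersolutionOn_of_integrableOn [Nonempty ι] (hdim : 3 ≤ finrank ℝ E)
    (hρ : ∀ i, 0 < ρ i) (hφpos : ∀ r > 0, 0 < φ r) (hφ : AntitoneOn φ (Ioi 0))
    (hf : AntitoneOn f (Ioi 0)) (hfpos : ∀ t > 0, 0 < f t)
    (hint : IntegrableOn (fun r => r * φ r) (Ioi 0)) :
    ∃ u : E → ℝ, IsPosSupersolutionOn (fun x => φ (infDist x (⋃ i, closedBall (c i) (ρ i)))) f u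
      (⋃ i, closedBall (c i) (ρ i))ᶜ := by
  obtain ⟨m, hm⟩ := Nat.exists_eq_add_of_le' hdim
  cases nonempty_fintype ι
  obtain ⟨ψ, hψ, hφψ⟩ := exists_continuousOn_between_of_antitoneOn_Ioi hφ
  have hψ₀ : ∀ r > 0, 0 ≤ ψ r := fun r hr =>
    (hφpos (2 * r) (by positivity)).le.trans (hφψ r hr).1
  have hhalf : ∀ r > 0, 0 < (2⁻¹ : ℝ) * r := fun r hr => by positivity
  have hψint : IntegrableOn (fun r => r * ψ (2⁻¹ * r)) (Ioi 0) :=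
    (integrableOn_Ioi_id_mul_comp_mul_left_iff (by norm_num)).2 <|
      integrableOn_id_mul_of_le (hψ.aemeasurable measurableSet_Ioi) hψ₀
        (fun r hr => (hφψ r hr).2) hint
  obtain ⟨u, hu⟩ := exists_isPosSupersolutionOn_sum (ψ := fun i s => ψ (2⁻¹ * (s - ρ i))) hm
    m.succ_ne_zero hρ
    (fun i => hψ.comp (by fun_prop) fun s hs => mem_Ioi.2 (hhalf _ (sub_pos.2 hs)))
    (fun i r hr => hψ₀ _ (hhalf _ (sub_pos.2 hr)))
    (fun i => (integrableOn_Ioi_sub_mul_comp_sub_iff (φ := fun r => ψ (2⁻¹ * r))).2 hψint)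
    (fun x hx => lt_norm_sub_of_mem_compl_iUnion_closedBall hx) hf (hfpos 1 one_pos).le
  refine ⟨u, hu.mono subset_rfl (fun x hx => ?_) hfpos⟩
  have hxi : ∀ i, 0 < ‖x - c i‖ - ρ i := fun i =>
    sub_pos.2 (lt_norm_sub_of_mem_compl_iUnion_closedBall hx i)
  obtain ⟨i, hi⟩ := exists_infDist_iUnion_closedBall_eq (fun i => (hρ i).le) hx
  calc φ (infDist x (⋃ i, closedBall (c i) (ρ i))) = φ (2 * (2⁻¹ * (‖x - c i‖ - ρ i))) := by
        rw [hi, mul_inv_cancel_left₀ two_ne_zero]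
    _ ≤ ψ (2⁻¹ * (‖x - c i‖ - ρ i)) := (hφψ _ (hhalf _ (hxi i))).1
    _ ≤ ∑ j, ψ (2⁻¹ * (‖x - c j‖ - ρ j)) :=
        Finset.single_le_sum (f := fun j => ψ (2⁻¹ * (‖x - c j‖ - ρ j)))
          (fun j _ => hψ₀ _ (hhalf _ (hxi j))) (Finset.mem_univ i)

theorem statement_5_general [Nonempty ι] (hdim : 3 ≤ finrank ℝ E) (hρ : ∀ i, 0 < ρ i)
    (hdisj : Pairwise fun i j => Disjoint (closedBall (c i) (ρ i)) (closedBall (c j) (ρ j)))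
    (hφpos : ∀ r > 0, 0 < φ r) (hφ : AntitoneOn φ (Ioi 0)) (hf : AntitoneOn f (Ioi 0))
    (hfpos : ∀ t > 0, 0 < f t) :
    (∃ u : E → ℝ, IsPosSupersolutionOn (fun x => φ (infDist x (⋃ i, closedBall (c i) (ρ i)))) f u
      (⋃ i, closedBall (c i) (ρ i))ᶜ) ↔ IntegrableOn (fun r => r * φ r) (Ioi 0) := by
  refine ⟨fun ⟨u, hu⟩ => ?_, exists_isPosSupersolutionOn_of_integrableOn hdim hρ hφpos hφ hf hfpos⟩
  obtain ⟨i⟩ := ‹Nonempty ι›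
  exact hu.integrableOn_id_mul hdim (hρ i) (fun j hji => hdisj hji.symm) hφpos hφ hf hfpos

end Main

/-- Theorem 3.4 (for a finite union of disjoint closed balls): existence of a `C²` positive
solution of `-Δu ≥ φ(δ_K(x)) f(u)` outside `K` iff `∫₀^∞ r φ(r) dr < ∞`. -/
theorem statement_5 {N : ℕ} (hN : 3 ≤ N) (k : ℕ) (hk : 1 ≤ k)
    (c : Fin k → EuclideanSpace ℝ (Fin N)) (ρ : Fin k → ℝ) (hρ : ∀ i, 0 < ρ i)
    (hdisj : Pairwise fun i j => Disjoint (closedBall (c i) (ρ i)) (closedBall (c j) (ρ j)))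
    (γ : NNReal) (hγ0 : 0 < γ) (hγ1 : γ < 1) (φ f : ℝ → ℝ)
    (hφpos : ∀ r : ℝ, 0 < r → 0 < φ r) (hφanti : AntitoneOn φ (Ioi (0:ℝ)))
    (hφhold : ∀ s : Set ℝ, IsCompact s → s ⊆ Ioi (0:ℝ) → ∃ C : NNReal, HolderOnWith C γ φ s)
    (hf : ContDiffOn ℝ 1 f (Ioi (0:ℝ))) (hfanti : StrictAntiOn f (Ioi (0:ℝ)))
    (hfpos : ∀ t : ℝ, 0 < t → 0 < f t) :
    (∃ u : EuclideanSpace ℝ (Fin N) → ℝ,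
        ContDiffOn ℝ 2 u (⋃ i, closedBall (c i) (ρ i))ᶜ ∧
        ∀ x ∈ (⋃ i, closedBall (c i) (ρ i))ᶜ,
          0 < u x ∧ φ (infDist x (⋃ i, closedBall (c i) (ρ i))) * f (u x) ≤ -laplacian u x) ↔
      IntegrableOn (fun r : ℝ => r * φ r) (Ioi (0:ℝ)) volume := by
  have : Nonempty (Fin k) := ⟨⟨0, hk⟩⟩
  simpa only [IsPosSupersolutionOn, laplacian_eq_innerProductSpace_laplacian] using
    statement_5_general (by rwa [finrank_euclideanSpace_fin]) hρ hdisj hφpos hφanti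
      hfanti.antitoneOn hfpos
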